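/- Let L ≥ 2 be even and let f_{i,j} : ℝ → ℂ (for 0 ≤ i, j ≤ L−1) be continuous 1-periodic functions, each with an absolutely convergent Fourier series. For integration variables x^a_{i,j}, x^b_{i,j} with indices modulo L, set ξ_{i,j}(x^a,x^b) = x^a_{i,j} + x^a_{i+1,j} + x^b_{i+1,j} + x^b_{i+1,j+1} − x^a_{i+1,j+1} − x^a_{i,j+1} − x^b_{i,j+1} − x^b_{i,j}. Then ∫_{[0,1]^{L²}} ∫_{[0,1]^{L²}} ∏_{i=0}^{L−1} ∏_{j=0}^{L−1} f_{i,j}(ξ_{i,j}(x^a,x^b)) dx^a dx^b = (∑_{ℓ∈ℤ} ∏_{(i,j): i+j odd} f̂_{i,j}(ℓ)) · (∑_{ℓ∈ℤ} ∏_{(i,j): i+j even} f̂_{i,j}(ℓ)), where the products run over 0 ≤ i, j ≤ L−1 with i+j of the stated parity. -/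

import Mathlib

open MeasureTheory

/-- The `ℓ`-th Fourier coefficient of a 1-periodic function `f : ℝ → ℂ`,
`f̂(ℓ) = ∫₀¹ f(x) e^{−2πiℓx} dx`. -/
noncomputable def fourierCoeffR (f : ℝ → ℂ) (ℓ : ℤ) : ℂ :=
  ∫ x in (0:ℝ)..1, f x * Complex.exp (-(2 * Real.pi * Complex.I * ℓ * x))

open scoped FourierTransform

/-! Expanding every `f p` in its Fourier series turns the integrand into an absolutely convergent
sum, over families of frequencies `m`, of characters of the torus of all loop variables. A character
integrates to `0` unless it is trivial, so only the `m` with `∑ p, m p * ξ p = 0` identically in the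
variables survive. The coefficients of `x^a` and `x^b` in this sum are, up to translation, the sum
and the difference of the two diagonal differences of `m`, so both families vanish exactly when `m`
is constant along both diagonals. On an even torus the diagonals split the sites into the two parity
classes: `m` is a checkerboard with one free frequency per class, and the sum factorizes. -/

section TsumPi

theorem integral_count_eq_tsum {α E : Type*} [Countable α] [MeasurableSpace α]
    [MeasurableSingletonClass α] [NormedAddCommGroup E] [NormedSpace ℝ E] [CompleteSpace E]
    {f : α → E} (hf : Integrable f Measure.count) :
    ∫ a, f a ∂Measure.count = ∑' a, f a := by
  simp only [integral_countable hf, count_real_singleton, one_smul]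

variable {ι : Type*} [Fintype ι] {κ : ι → Type*} [∀ i, Countable (κ i)]

theorem pi_count [∀ i, MeasurableSpace (κ i)] [∀ i, MeasurableSingletonClass (κ i)] :
    Measure.pi (fun i => (Measure.count : Measure (κ i))) = Measure.count := by
  refine Measure.ext_of_singleton fun m => ?_
  simp only [Measure.pi_singleton, Measure.count_singleton, Finset.prod_const_one]

variable {𝕜 : Type*} [RCLike 𝕜] {f : (i : ι) → κ i → 𝕜}

theorem summable_norm_pi_prod (hf : ∀ i, Summable fun k => ‖f i k‖) :
    Summable fun m : (i : ι) → κ i => ‖∏ i, f i (m i)‖ := by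
  let _ (i : ι) : MeasurableSpace (κ i) := ⊤
  have h_int := Integrable.fintype_prod_dep (μ := fun _ => Measure.count)
    fun i => integrable_count_iff.mpr (hf i)
  rw [pi_count] at h_int
  exact integrable_count_iff.mp h_int

-- For counting measures this is Fubini's theorem for a product of functions of one variable.
theorem tsum_pi_prod (hf : ∀ i, Summable fun k => ‖f i k‖) :
    ∑' m : (i : ι) → κ i, ∏ i, f i (m i) = ∏ i, ∑' k, f i k := by
  let _ (i : ι) : MeasurableSpace (κ i) := ⊤
  have h_int : Integrable (fun m : (i : ι) → κ i => ∏ i, f i (m i)) Measure.count :=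
    integrable_count_iff.mpr (summable_norm_pi_prod hf)
  calc ∑' m : (i : ι) → κ i, ∏ i, f i (m i)
      = ∫ m : (i : ι) → κ i, ∏ i, f i (m i) ∂Measure.pi fun _ => Measure.count := by
        rw [pi_count, integral_count_eq_tsum h_int]
    _ = ∏ i, ∫ k, f i k ∂Measure.count := integral_fintype_prod_eq_prod f
    _ = ∏ i, ∑' k, f i k := Finset.prod_congr rfl fun i _ =>
        integral_count_eq_tsum (integrable_count_iff.mpr (hf i))

end TsumPi

section Uncurry

variable {ι κ : Type*} [Fintype ι] [Fintype κ]

theorem measurePreserving_uncurry :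
    MeasurePreserving (Function.uncurry : (ι → κ → ℝ) → ι × κ → ℝ) := by
  have h_meas : Measurable (Function.uncurry : (ι → κ → ℝ) → ι × κ → ℝ) :=
    (MeasurableEquiv.curry ι κ ℝ).symm.measurable
  refine ⟨h_meas, (Measure.pi_eq fun S hS => ?_).symm⟩
  have h_box : (Function.uncurry : (ι → κ → ℝ) → ι × κ → ℝ) ⁻¹' Set.univ.pi S =
      Set.univ.pi fun i => Set.univ.pi fun j => S (i, j) := by
    ext x
    simp [Set.mem_pi, Function.uncurry]
  rw [Measure.map_apply h_meas (.univ_pi hS), h_box]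
  simp only [volume_pi_pi, Fintype.prod_prod_type]

variable {E : Type*} [NormedAddCommGroup E] [NormedSpace ℝ E] (a b : ι × κ → ℝ)

theorem setIntegral_Icc_uncurry (F : (ι × κ → ℝ) → E) :
    ∫ x in Set.Icc (Function.curry a) (Function.curry b), F (Function.uncurry x) =
      ∫ y in Set.Icc a b, F y := by
  have h_preimage : Function.uncurry ⁻¹' Set.Icc a b =
      Set.Icc (Function.curry a) (Function.curry b) := by
    ext x
    simp [Pi.le_def, Function.uncurry]
  rw [← h_preimage]
  exact measurePreserving_uncurry.setIntegral_preimage_emb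
    (MeasurableEquiv.curry ι κ ℝ).symm.measurableEmbedding F _

theorem setIntegral_Icc_uncurry_uncurry (F : (ι × κ → ℝ) → (ι × κ → ℝ) → E) :
    ∫ x in Set.Icc (Function.curry a) (Function.curry b),
        ∫ x' in Set.Icc (Function.curry a) (Function.curry b),
          F (Function.uncurry x) (Function.uncurry x') =
      ∫ y in Set.Icc a b, ∫ y' in Set.Icc a b, F y y' := by
  simp only [setIntegral_Icc_uncurry a b (F _),
    setIntegral_Icc_uncurry a b fun y => ∫ y' in Set.Icc a b, F y y']

end Uncurry

section FourierChar

theorem coe_fourierChar_intCast_mul (n : ℤ) (x : ℝ) :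
    (𝐞 (n * x) : ℂ) = Complex.exp (2 * Real.pi * Complex.I * n * x) := by
  rw [Real.fourierChar_apply]
  push_cast
  ring_nf

theorem coe_fourierChar_sum {ι : Type*} (s : Finset ι) (x : ι → ℝ) :
    (𝐞 (∑ i ∈ s, x i) : ℂ) = ∏ i ∈ s, (𝐞 (x i) : ℂ) := by
  simp only [Real.fourierChar_apply, Finset.mul_sum, Complex.ofReal_sum, Finset.sum_mul,
    Complex.exp_sum]

theorem continuous_coe_fourierChar : Continuous fun x : ℝ => (𝐞 x : ℂ) := by
  simp only [Real.fourierChar_apply]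
  fun_prop

theorem setIntegral_Icc_fourierChar (n : ℤ) :
    ∫ x in Set.Icc (0 : ℝ) 1, (𝐞 (n * x) : ℂ) = if n = 0 then 1 else 0 := by
  simp_rw [coe_fourierChar_intCast_mul]
  rw [integral_Icc_eq_integral_Ioc, ← intervalIntegral.integral_of_le zero_le_one]
  split_ifs with h
  · simp [h]
  · have h_ne : 2 * Real.pi * Complex.I * n ≠ 0 := by simp [h, Real.pi_ne_zero]
    have h_one : Complex.exp (2 * Real.pi * Complex.I * n * (1 : ℝ)) = 1 :=
      Complex.exp_eq_one_iff.mpr ⟨n, by push_cast; ring⟩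
    rw [integral_exp_mul_complex h_ne, h_one]
    simp

theorem setIntegral_Icc_fourierChar_sum_mul {ι : Type*} [Fintype ι] (n : ι → ℤ) :
    ∫ x in Set.Icc (0 : ι → ℝ) 1, (𝐞 (∑ i, n i * x i) : ℂ) = if n = 0 then 1 else 0 := by
  simp_rw [coe_fourierChar_sum]
  rw [← Set.pi_univ_Icc, volume_pi, Measure.restrict_pi_pi,
    integral_fintype_prod_eq_prod (fun i (y : ℝ) => (𝐞 (n i * y) : ℂ))]
  simp only [Pi.zero_apply, Pi.one_apply, setIntegral_Icc_fourierChar, Finset.prod_ite_zero,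
    Finset.mem_univ, true_imp_iff, Finset.prod_const_one, funext_iff]

theorem integral_prod_tsum_fourierChar {ι X : Type*} [Fintype ι] [MeasurableSpace X]
    (μ : Measure X) [IsFiniteMeasure μ] {c : ι → ℤ → ℂ} (hc : ∀ i, Summable fun ℓ => ‖c i ℓ‖)
    {ξ : ι → X → ℝ} (hξ : ∀ i, Measurable (ξ i)) :
    ∫ x, ∏ i, ∑' ℓ : ℤ, c i ℓ * 𝐞 (ℓ * ξ i x) ∂μ =
      ∑' m : ι → ℤ, (∏ i, c i (m i)) * ∫ x, (𝐞 (∑ i, m i * ξ i x) : ℂ) ∂μ := by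
  have h_expand (x : X) : ∏ i, ∑' ℓ : ℤ, c i ℓ * 𝐞 (ℓ * ξ i x) =
      ∑' m : ι → ℤ, (∏ i, c i (m i)) * 𝐞 (∑ i, m i * ξ i x) := by
    simp_rw [coe_fourierChar_sum, ← Finset.prod_mul_distrib]
    refine (tsum_pi_prod fun i => ?_).symm
    simpa only [norm_mul, Circle.norm_coe, mul_one] using hc i
  have h_meas (m : ι → ℤ) : Measurable fun x => (𝐞 (∑ i, m i * ξ i x) : ℂ) :=
    continuous_coe_fourierChar.measurable.comp (by fun_prop)
  simp_rw [h_expand, ← integral_const_mul]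
  refine (integral_tsum_of_summable_integral_norm (fun m => ?_) ?_).symm
  · exact (Integrable.of_bound (h_meas m).aestronglyMeasurable 1
      (.of_forall fun _ => (Circle.norm_coe _).le)).const_mul _
  · simp_rw [norm_mul, Circle.norm_coe, mul_one, integral_const, smul_eq_mul]
    exact (summable_norm_pi_prod hc).mul_left _

end FourierChar

theorem sum_mul_comp_add_right {G R : Type*} [Fintype G] [AddGroup G]
    [NonUnitalNonAssocSemiring R] (g x : G → R) (v : G) :
    ∑ p, g p * x (p + v) = ∑ p, g (p - v) * x p := by
  rw [← Equiv.sum_comp (Equiv.addRight v) fun p => g (p - v) * x p]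
  simp only [Equiv.coe_addRight, add_sub_cancel_right]

section Loop

variable {V : Type*} [AddCommGroup V] (s t : V)

/-- The argument `ξ_p` of the function sitting at the site `p`. The sites form an arbitrary abelian
group `V` with marked translations `s` and `t`; on the `L × L` torus these are `(1, 0)` and
`(0, 1)`. -/
def loopPhase (xa xb : V → ℝ) (p : V) : ℝ :=
  xa p + xa (p + s) + xb (p + s) + xb (p + s + t)
    - xa (p + s + t) - xa (p + t) - xb (p + t) - xb p

/-- The coefficient of `xa p` in `∑ q, m q * loopPhase s t xa xb q`. -/
def loopFreqA (m : V → ℤ) (p : V) : ℤ :=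
  m p + m (p - s) - m (p - (s + t)) - m (p - t)

/-- The coefficient of `xb p` in `∑ q, m q * loopPhase s t xa xb q`. -/
def loopFreqB (m : V → ℤ) (p : V) : ℤ :=
  m (p - s) + m (p - (s + t)) - m (p - t) - m p

/-- The functions on the sites that are constant along the two diagonal directions `s + t` and
`s - t`. With integer values, these are the frequencies that contribute to the loop integral. -/
def diagonalPeriodic (α : Type*) : Set (V → α) :=
  {m | Function.Periodic m (s + t) ∧ Function.Periodic m (s - t)}

theorem loopFreq_eq_zero_iff (m : V → ℤ) :
    loopFreqA s t m = 0 ∧ loopFreqB s t m = 0 ↔ m ∈ diagonalPeriodic s t ℤ := by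
  have h_diag : Function.Periodic m (s + t) ↔ ∀ p, m p = m (p - (s + t)) :=
    ⟨fun h p => (h.sub_eq p).symm, fun h p => by simpa using h (p + (s + t))⟩
  have h_anti : Function.Periodic m (s - t) ↔ ∀ p, m (p - t) = m (p - s) :=
    ⟨fun h p => by simpa using h (p - s), fun h p => by simpa [add_sub_assoc] using h (p + s)⟩
  change _ ↔ Function.Periodic m (s + t) ∧ Function.Periodic m (s - t)
  simp only [h_diag, h_anti, funext_iff, loopFreqA, loopFreqB, Pi.zero_apply, ← forall_and]
  refine forall_congr' fun p => ?_
  omega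

theorem continuous_loopPhase (p : V) :
    Continuous fun z : (V → ℝ) × (V → ℝ) => loopPhase s t z.1 z.2 p := by
  unfold loopPhase
  fun_prop

variable [Fintype V]

theorem sum_mul_loopPhase (m : V → ℤ) (xa xb : V → ℝ) :
    ∑ p, m p * loopPhase s t xa xb p =
      ∑ p, loopFreqA s t m p * xa p + ∑ p, loopFreqB s t m p * xb p := by
  simp only [loopPhase, loopFreqA, loopFreqB, add_assoc _ s t, Int.cast_add, Int.cast_sub,
    mul_add, mul_sub, add_mul, sub_mul, Finset.sum_add_distrib, Finset.sum_sub_distrib,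
    sum_mul_comp_add_right (fun p => (m p : ℝ))]
  ring

theorem setIntegral_fourierChar_sum_mul_loopPhase (m : V → ℤ) :
    ∫ z in Set.Icc (0 : V → ℝ) 1 ×ˢ Set.Icc (0 : V → ℝ) 1,
        (𝐞 (∑ p, m p * loopPhase s t z.1 z.2 p) : ℂ) =
      (diagonalPeriodic s t ℤ).indicator 1 m := by
  classical
  simp_rw [sum_mul_loopPhase, AddChar.map_add_eq_mul, Circle.coe_mul]
  rw [Measure.volume_eq_prod,
    setIntegral_prod_mul (fun xa : V → ℝ => (𝐞 (∑ p, loopFreqA s t m p * xa p) : ℂ))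
      (fun xb : V → ℝ => (𝐞 (∑ p, loopFreqB s t m p * xb p) : ℂ)),
    setIntegral_Icc_fourierChar_sum_mul, setIntegral_Icc_fourierChar_sum_mul]
  simp only [Set.indicator_apply, ← loopFreq_eq_zero_iff, ite_and, ite_mul, one_mul, zero_mul,
    Pi.one_apply]

theorem setIntegral_prod_comp_loopPhase {f : V → ℝ → ℂ} {c : V → ℤ → ℂ}
    (hf : ∀ p, Continuous (f p)) (hc : ∀ p, Summable fun ℓ => ‖c p ℓ‖)
    (hfc : ∀ p x, f p x = ∑' ℓ : ℤ, c p ℓ * 𝐞 (ℓ * x)) :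
    ∫ xa in Set.Icc (0 : V → ℝ) 1, ∫ xb in Set.Icc (0 : V → ℝ) 1,
        ∏ p, f p (loopPhase s t xa xb p) =
      ∑' m : diagonalPeriodic s t ℤ, ∏ p, c p (m.1 p) := by
  let B := Set.Icc (0 : V → ℝ) 1 ×ˢ Set.Icc (0 : V → ℝ) 1
  have hB : IsCompact B := isCompact_Icc.prod isCompact_Icc
  have : IsFiniteMeasure (volume.restrict B) :=
    isFiniteMeasure_restrict.mpr hB.measure_lt_top.ne
  have h_int : IntegrableOn (fun z : (V → ℝ) × (V → ℝ) => ∏ p, f p (loopPhase s t z.1 z.2 p)) B :=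
    (continuous_finsetProd _ fun p _ =>
      (hf p).comp (continuous_loopPhase s t p)).continuousOn.integrableOn_compact hB
  calc _ = ∫ z in B, ∏ p, ∑' ℓ : ℤ, c p ℓ * 𝐞 (ℓ * loopPhase s t z.1 z.2 p) := by
        simp_rw [← hfc]
        exact (setIntegral_prod _ h_int).symm
    _ = ∑' m : V → ℤ, (∏ p, c p (m p)) * (diagonalPeriodic s t ℤ).indicator 1 m := by
        rw [integral_prod_tsum_fourierChar _ hc fun p => (continuous_loopPhase s t p).measurable]
        simp_rw [B, setIntegral_fourierChar_sum_mul_loopPhase]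
    _ = ∑' m : diagonalPeriodic s t ℤ, ∏ p, c p (m.1 p) := by
        classical
        rw [tsum_subtype _ fun m : V → ℤ => ∏ p, c p (m p)]
        simp only [Set.indicator_apply, Pi.one_apply, mul_ite, mul_one, mul_zero]

end Loop

section Checkerboard

variable {L : ℕ} {α : Type*}

/-- The function on the `L × L` torus equal to `q.1` on the odd sites and to `q.2` on the even
sites. -/
def checkerboard (q : α × α) (p : Fin L × Fin L) : α :=
  if Odd (p.1.val + p.2.val) then q.1 else q.2

theorem prod_checkerboard {M : Type*} [CommMonoid M] (c : Fin L × Fin L → α → M) (q : α × α) :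
    ∏ p, c p (checkerboard q p) =
      (∏ p : Fin L × Fin L with Odd (p.1.val + p.2.val), c p q.1) *
        ∏ p : Fin L × Fin L with Even (p.1.val + p.2.val), c p q.2 := by
  simp only [checkerboard, apply_ite (c _), Finset.prod_ite, Nat.not_odd_iff_even]

theorem checkerboard_injective (hL : 2 ≤ L) :
    Function.Injective (checkerboard : α × α → Fin L × Fin L → α) := fun q q' h => by
  have h_odd := congrFun h (⟨0, by omega⟩, ⟨1, by omega⟩)
  have h_even := congrFun h (⟨0, by omega⟩, ⟨0, by omega⟩)
  exact Prod.ext (by simpa [checkerboard] using h_odd) (by simpa [checkerboard] using h_even)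

variable [NeZero L]

theorem odd_val_add_one_iff (heven : Even L) (i : Fin L) : Odd (i + 1).val ↔ ¬ Odd i.val := by
  rw [Fin.val_add, Odd.mod_even_iff heven, Fin.val_one', Nat.odd_add, Even.mod_even_iff heven]
  simp

open scoped Fin.CommRing in
theorem val_nsmul_one (i : Fin L) : i.val • (1 : Fin L) = i :=
  (nsmul_one _).trans (Fin.cast_val_eq_self i)

theorem checkerboard_mem_diagonalPeriodic (heven : Even L) (q : α × α) :
    checkerboard (L := L) q ∈ diagonalPeriodic (1, 0) (0, 1) α := by
  constructor <;> rintro ⟨i, j⟩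
  · simp only [checkerboard, Prod.mk_add_mk, add_zero, zero_add, Nat.odd_add,
      ← Nat.not_odd_iff_even, odd_val_add_one_iff heven, not_iff_not]
  · obtain ⟨j, rfl⟩ : ∃ k, j = k + 1 := ⟨j - 1, (sub_add_cancel j 1).symm⟩
    simp only [checkerboard, Prod.mk_sub_mk, Prod.mk_add_mk, sub_zero, zero_sub,
      add_neg_cancel_right, Nat.odd_add, ← Nat.not_odd_iff_even, odd_val_add_one_iff heven,
      not_iff_not, not_not]

-- `m (i, j)` only depends on `i + j`, with period `2` because `(1, 1) - (1, -1) = (0, 2)`.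
theorem exists_checkerboard_eq {m : Fin L × Fin L → α} (hm : m ∈ diagonalPeriodic (1, 0) (0, 1) α) :
    ∃ q, checkerboard q = m := by
  obtain ⟨h_diag, h_anti⟩ := hm
  let N (n : ℕ) : α := m (0, n • 1)
  have h_sum (a b : ℕ) : m (a • 1, b • 1) = N (a + b) := by
    have h : (0, (a + b) • 1) + a • ((1, 0) - (0, 1)) = ((a • 1, b • 1) : Fin L × Fin L) := by
      ext1 <;> simp [add_smul]
    rw [← h, h_anti.nsmul a]
  have h_per : Function.Periodic N 2 := fun n => by
    have h : (0, n • 1) + ((1, 0) + (0, 1)) - ((1, 0) - (0, 1)) =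
        ((0, (n + 2) • 1) : Fin L × Fin L) := by
      ext1 <;> simp [add_smul, two_nsmul, add_assoc]
    simp only [N, ← h, h_anti.sub_eq, h_diag (0, n • 1)]
  have h_mod (i j : Fin L) : m (i, j) = N ((i.val + j.val) % 2) := by
    rw [h_per.map_mod_nat, ← h_sum, val_nsmul_one, val_nsmul_one]
  refine ⟨(N 1, N 0), funext fun ⟨i, j⟩ => ?_⟩
  rw [h_mod, checkerboard]
  rcases Nat.even_or_odd (i.val + j.val) with h | h
  · rw [if_neg (Nat.not_odd_iff_even.mpr h), Nat.even_iff.mp h]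
  · rw [if_pos h, Nat.odd_iff.mp h]

theorem range_checkerboard (heven : Even L) :
    Set.range (checkerboard : α × α → Fin L × Fin L → α) = diagonalPeriodic (1, 0) (0, 1) α :=
  Set.Subset.antisymm (Set.range_subset_iff.mpr (checkerboard_mem_diagonalPeriodic heven))
    fun _ => exists_checkerboard_eq

theorem tsum_prod_diagonalPeriodic (heven : Even L) {c : Fin L × Fin L → ℤ → ℂ}
    (hc : ∀ p, Summable fun ℓ => ‖c p ℓ‖) :
    ∑' m : diagonalPeriodic ((1, 0) : Fin L × Fin L) (0, 1) ℤ, ∏ p, c p (m.1 p) =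
      (∑' ℓ : ℤ, ∏ p : Fin L × Fin L with Odd (p.1.val + p.2.val), c p ℓ) *
        ∑' ℓ : ℤ, ∏ p : Fin L × Fin L with Even (p.1.val + p.2.val), c p ℓ := by
  have h_inj : Function.Injective (checkerboard : ℤ × ℤ → Fin L × Fin L → ℤ) :=
    checkerboard_injective (Nat.le_of_dvd (NeZero.pos L) heven.two_dvd)
  have h_sum : Summable fun q : ℤ × ℤ => ∏ p : Fin L × Fin L, c p (checkerboard q p) :=
    (summable_norm_pi_prod hc).of_norm.comp_injective h_inj
  rw [← range_checkerboard heven, tsum_range (fun m => ∏ p, c p (m p)) h_inj, h_sum.tsum_prod]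
  simp only [prod_checkerboard, tsum_mul_left, tsum_mul_right]

end Checkerboard

theorem stmt5 (L : ℕ) [NeZero L] (heven : Even L) (f : Fin L → Fin L → ℝ → ℂ)
    (hcont : ∀ i j, Continuous (f i j))
    (hper : ∀ i j (x : ℝ), f i j (x + 1) = f i j x)
    (habs : ∀ i j, Summable fun ℓ : ℤ => ‖fourierCoeffR (f i j) ℓ‖)
    (hrep : ∀ i j (x : ℝ),
      f i j x = ∑' ℓ : ℤ, fourierCoeffR (f i j) ℓ *
        Complex.exp (2 * Real.pi * Complex.I * ℓ * x)) :
    (∫ xa in Set.Icc (0 : Fin L → Fin L → ℝ) 1,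
      ∫ xb in Set.Icc (0 : Fin L → Fin L → ℝ) 1,
        ∏ i, ∏ j, f i j
          (xa i j + xa (i + 1) j + xb (i + 1) j + xb (i + 1) (j + 1)
            - xa (i + 1) (j + 1) - xa i (j + 1) - xb i (j + 1) - xb i j)) =
      (∑' ℓ : ℤ, ∏ p ∈ Finset.univ.filter
          (fun p : Fin L × Fin L => Odd (p.1.val + p.2.val)),
          fourierCoeffR (f p.1 p.2) ℓ) *
      (∑' ℓ : ℤ, ∏ p ∈ Finset.univ.filter
          (fun p : Fin L × Fin L => Even (p.1.val + p.2.val)),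
          fourierCoeffR (f p.1 p.2) ℓ) := by
  let g (p : Fin L × Fin L) : ℝ → ℂ := f p.1 p.2
  have h_loop (xa xb : Fin L → Fin L → ℝ) :
      ∏ i, ∏ j, f i j
          (xa i j + xa (i + 1) j + xb (i + 1) j + xb (i + 1) (j + 1)
            - xa (i + 1) (j + 1) - xa i (j + 1) - xb i (j + 1) - xb i j) =
        ∏ p, g p (loopPhase (1, 0) (0, 1) (Function.uncurry xa) (Function.uncurry xb) p) := by
    simp [g, Fintype.prod_prod_type, loopPhase]
  have h_series (p : Fin L × Fin L) (x : ℝ) :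
      g p x = ∑' ℓ : ℤ, fourierCoeffR (g p) ℓ * 𝐞 (ℓ * x) := by
    simpa only [coe_fourierChar_intCast_mul] using hrep p.1 p.2 x
  have h_abs (p : Fin L × Fin L) : Summable fun ℓ : ℤ => ‖fourierCoeffR (g p) ℓ‖ := habs p.1 p.2
  simp_rw [h_loop]
  calc _ = ∫ xa in Set.Icc (0 : Fin L × Fin L → ℝ) 1, ∫ xb in Set.Icc (0 : Fin L × Fin L → ℝ) 1,
          ∏ p, g p (loopPhase (1, 0) (0, 1) xa xb p) :=
        setIntegral_Icc_uncurry_uncurry 0 1 fun xa xb =>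
          ∏ p, g p (loopPhase (1, 0) (0, 1) xa xb p)
    _ = ∑' m : diagonalPeriodic (1, 0) (0, 1) ℤ, ∏ p, fourierCoeffR (g p) (m.1 p) :=
        setIntegral_prod_comp_loopPhase _ _ (fun p => hcont p.1 p.2) h_abs h_series
    _ = _ := tsum_prod_diagonalPeriodic heven h_abs
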